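/- arXiv:1810.03817 — 4 statements merged into one kernel-verified Lean document; each statement's English description precedes it below -/
import Mathlib

section
/- Let P ≥ 2 and let x_1,…,x_N be any points of X. Then the empirical Rademacher complexity of the class F̂_M satisfies R̂(F̂_M) ≤ B·C·√(3⌈log P⌉/N), where log denotes the natural logarithm and ⌈·⌉ the ceiling function. (Lemma 1 of the paper; since the bound holds for every sample, the same bound holds for the Rademacher complexity R(F̂_M) obtained by averaging over the data.) -/
/-- The class `F̂_M` of functions `x ↦ ∑_{p=1}^P ∑_{m=1}^{M_p} θ_{p,m} √(ν_p) φ_{p,m}(x)`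
with `∑_p M_p = M`, `‖θ‖₂ ≤ C`, and `ν` in the probability simplex `Δ_P`. -/
def FhatM {X : Type*} (P : ℕ) (φ : Fin P → ℕ → X → ℝ) (C : ℝ) (M : ℕ) : Set (X → ℝ) :=
  {f | ∃ (Mp : Fin P → ℕ) (θ : Fin P → ℕ → ℝ) (ν : Fin P → ℝ),
    (∑ p, Mp p) = M ∧ (∀ p, 0 ≤ ν p) ∧ (∑ p, ν p) = 1 ∧
    (∑ p, ∑ m ∈ Finset.range (Mp p), (θ p m) ^ 2) ≤ C ^ 2 ∧
    ∀ x, f x = ∑ p, ∑ m ∈ Finset.range (Mp p), θ p m * Real.sqrt (ν p) * φ p m x}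

/-- Empirical Rademacher complexity of a class `F` of real-valued functions, for the
sample `x_1, …, x_N`:  `(1/N)·2^{-N} ∑_{σ ∈ {-1,1}^N} sup_{f ∈ F} ∑_n σ_n f(x_n)`. -/
noncomputable def empRad {X : Type*} (N : ℕ) (F : Set (X → ℝ)) (xs : Fin N → X) : ℝ :=
  (1 / ((N : ℝ) * 2 ^ N)) *
    ∑ σ : Fin N → Bool,
      sSup ((fun f => ∑ n, (if σ n then (1 : ℝ) else -1) * f (xs n)) '' F)

/-!
Writing `w_p = √ν_p θ_p`, every member of `F̂_M` is `x ↦ ∑ p, ⟪w_p, φ_p x⟫` with `∑ p, ‖w_p‖ ≤ C`,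
so its correlation with signs `σ` is at most `C · max_p ‖S_p‖`, where `S_p = ∑ n, σ_n φ_p(x_n)`.
Bounding the maximum by the sum of the `2r`-th powers costs a factor `P`, which becomes at most `√e`
after taking `2r`-th roots when `r = ⌈log P⌉`. It remains to see that the even moments of a
vector-valued Rademacher sum are at most Gaussian: `𝔼 ‖S‖ ^ (2r) ≤ (2r - 1)‼ (∑ n, ‖v_n‖²) ^ r`.
This follows by induction on `r` from a discrete form of Gaussian integration by parts. Expand one
factor of `‖S‖ ^ (2r + 2) = ⟪S, ‖S‖ ^ (2r) S⟫` as `∑ n, σ_n v_n`; since flipping the `n`-th sign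
preserves the uniform distribution, the `n`-th term is governed by the increment of the map
`u ↦ ‖u‖ ^ (2r) u` between `S` and `S - 2 σ_n v_n`, which is of size `(2r + 1) ‖S‖ ^ (2r)` per unit
length.
-/

open scoped BigOperators

lemma sq_sub_sq_mul_pow_sub_pow_le {s t : ℝ} (hs : 0 ≤ s) (ht : 0 ≤ t) (m : ℕ) :
    (s ^ 2 - t ^ 2) * (s ^ m - t ^ m) ≤ m * (s - t) ^ 2 * (s ^ m + t ^ m) := by
  induction m with
  | zero => simp
  | succ m ih =>
    have hmono : 0 ≤ (s - t) * (s ^ m - t ^ m) := by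
      rcases le_total s t with h | h
      · exact mul_nonneg_of_nonpos_of_nonpos (sub_nonpos.2 h) (sub_nonpos.2 (by gcongr))
      · exact mul_nonneg (sub_nonneg.2 h) (sub_nonneg.2 (by gcongr))
    have htwice := calc
      2 * ((s ^ 2 - t ^ 2) * (s ^ (m + 1) - t ^ (m + 1)))
        = (s + t) * ((s ^ 2 - t ^ 2) * (s ^ m - t ^ m)) +
            (s + t) * ((s - t) ^ 2 * (s ^ m + t ^ m)) := by ring
      _ ≤ (s + t) * (m * (s - t) ^ 2 * (s ^ m + t ^ m)) +
            (s + t) * ((s - t) ^ 2 * (s ^ m + t ^ m)) := by gcongr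
      _ = (m + 1) * (s - t) ^ 2 *
            (2 * (s ^ (m + 1) + t ^ (m + 1)) - (s - t) * (s ^ m - t ^ m)) := by ring
      _ ≤ (m + 1) * (s - t) ^ 2 * (2 * (s ^ (m + 1) + t ^ (m + 1))) := by
        gcongr
        exact sub_le_self _ hmono
    push_cast
    linarith

lemma two_mul_add_one_mul_pow_self_le (r : ℕ) : (2 * r + 1) * r ^ r ≤ (r + 1) ^ (r + 1) := by
  have hbern : r ^ r + r * r ^ (r - 1) ≤ (r + 1) ^ r := by
    simpa using pow_add_mul_le_add_pow (a := r) (b := 1) (Nat.zero_le _) (by simp) r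
  rcases eq_or_ne r 0 with rfl | hr
  · simp
  rw [mul_pow_sub_one hr] at hbern
  calc (2 * r + 1) * r ^ r ≤ (r + 1) * (r ^ r + r ^ r) := by
        rw [← two_mul, ← mul_assoc]
        gcongr
        lia
    _ ≤ (r + 1) * (r + 1) ^ r := by gcongr
    _ = (r + 1) ^ (r + 1) := (pow_succ' _ _).symm

open scoped Nat in
lemma doubleFactorial_two_mul_sub_one_le_pow_self (r : ℕ) : (2 * r - 1)‼ ≤ r ^ r := by
  induction r with
  | zero => simp
  | succ r ih =>
    calc (2 * (r + 1) - 1)‼ = (2 * r + 1) * (2 * r - 1)‼ := Nat.doubleFactorial_add_one (2 * r)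
      _ ≤ (2 * r + 1) * r ^ r := by gcongr
      _ ≤ (r + 1) ^ (r + 1) := two_mul_add_one_mul_pow_self_le r

lemma pow_expect_le_expect_pow {α : Type*} [Fintype α] [Nonempty α] {f : α → ℝ}
    (hf : ∀ a, 0 ≤ f a) (k : ℕ) : (𝔼 a, f a) ^ k ≤ 𝔼 a, f a ^ k := by
  simpa only [Fintype.expect_eq_sum_div_card, Finset.sum_div, inv_mul_eq_div] using
    Real.pow_arith_mean_le_arith_mean_pow Finset.univ (fun _ => (Fintype.card α : ℝ)⁻¹) f
      (fun _ _ => by positivity) (by simp) (fun a _ => hf a) k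

/-- The sign `±1` encoded by a Boolean, with `true` for `+1`. -/
def boolSign (b : Bool) : ℝ := if b then 1 else -1

lemma boolSign_not (b : Bool) : boolSign (!b) = -boolSign b := by
  cases b <;> simp [boolSign]

lemma abs_boolSign (b : Bool) : |boolSign b| = 1 := by
  cases b <;> simp [boolSign]

section SignFlip

variable {ι : Type*} [DecidableEq ι]

/-- The involution of the sign patterns on `ι` that flips the `i`-th sign. -/
def flipSign (i : ι) : Equiv.Perm (ι → Bool) :=
  Function.Involutive.toPerm (fun σ => Function.update σ i (!σ i)) fun σ => by simp

lemma flipSign_apply_self (i : ι) (σ : ι → Bool) : flipSign i σ i = !σ i :=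
  Function.update_self ..

lemma flipSign_apply_of_ne {i j : ι} (h : j ≠ i) (σ : ι → Bool) : flipSign i σ j = σ j :=
  Function.update_of_ne h ..

lemma expect_le_expect_of_add_flipSign_le [Fintype ι] (i : ι) {f g : (ι → Bool) → ℝ}
    (h : ∀ σ, f σ + f (flipSign i σ) ≤ g σ + g (flipSign i σ)) : 𝔼 σ, f σ ≤ 𝔼 σ, g σ := by
  have hflip (f : (ι → Bool) → ℝ) : 𝔼 σ, f (flipSign i σ) = 𝔼 σ, f σ :=
    Fintype.expect_equiv (flipSign i) _ _ fun _ => rfl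
  have hpairs := Finset.expect_le_expect fun σ (_ : σ ∈ Finset.univ) => h σ
  rw [Finset.expect_add_distrib, Finset.expect_add_distrib, hflip, hflip] at hpairs
  linarith

end SignFlip

/-- The Rademacher sum `∑ i, ± v i`, with signs given by `σ`. -/
def rademacherSum {ι E : Type*} [Fintype ι] [AddCommGroup E] [Module ℝ E] (v : ι → E)
    (σ : ι → Bool) : E :=
  ∑ i, boolSign (σ i) • v i

lemma rademacherSum_sub_flipSign {ι E : Type*} [Fintype ι] [DecidableEq ι] [AddCommGroup E]
    [Module ℝ E] (v : ι → E) (i : ι) (σ : ι → Bool) :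
    rademacherSum v σ - rademacherSum v (flipSign i σ) = (2 : ℝ) • boolSign (σ i) • v i := by
  rw [rademacherSum, rademacherSum, ← Finset.sum_sub_distrib,
    Finset.sum_eq_single_of_mem i (Finset.mem_univ i)
      fun j _ hj => by rw [flipSign_apply_of_ne hj, sub_self],
    flipSign_apply_self, boolSign_not, neg_smul, sub_neg_eq_add, two_smul]

section Khintchine

open scoped RealInnerProductSpace Nat

variable {ι E : Type*} [Fintype ι] [NormedAddCommGroup E] [InnerProductSpace ℝ E]

lemma rademacherSum_inner (w : E) (v : ι → E) (σ : ι → Bool) :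
    rademacherSum (fun i => ⟪w, v i⟫) σ = ⟪w, rademacherSum v σ⟫ := by
  simp only [rademacherSum, inner_sum, real_inner_smul_right, smul_eq_mul]

lemma inner_sub_norm_pow_smul_sub_le (u w : E) (k : ℕ) :
    ⟪u - w, ‖u‖ ^ (2 * k) • u - ‖w‖ ^ (2 * k) • w⟫ ≤
      (2 * k + 1) / 2 * ‖u - w‖ ^ 2 * (‖u‖ ^ (2 * k) + ‖w‖ ^ (2 * k)) := by
  have hdist : (‖u‖ - ‖w‖) ^ 2 ≤ ‖u - w‖ ^ 2 :=
    sq_le_sq.2 ((abs_norm_sub_norm_le u w).trans_eq (abs_norm _).symm)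
  have hpow : (‖u‖ ^ 2 - ‖w‖ ^ 2) * (‖u‖ ^ (2 * k) - ‖w‖ ^ (2 * k)) ≤
      2 * k * ‖u - w‖ ^ 2 * (‖u‖ ^ (2 * k) + ‖w‖ ^ (2 * k)) := by
    refine (sq_sub_sq_mul_pow_sub_pow_le (norm_nonneg u) (norm_nonneg w) (2 * k)).trans ?_
    push_cast
    gcongr
  have hpolar : ⟪u - w, ‖u‖ ^ (2 * k) • u - ‖w‖ ^ (2 * k) • w⟫ =
      (‖u - w‖ ^ 2 * (‖u‖ ^ (2 * k) + ‖w‖ ^ (2 * k)) +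
        (‖u‖ ^ 2 - ‖w‖ ^ 2) * (‖u‖ ^ (2 * k) - ‖w‖ ^ (2 * k))) / 2 := by
    rw [norm_sub_sq_real]
    simp only [inner_sub_left, inner_sub_right, real_inner_smul_right,
      real_inner_self_eq_norm_sq, real_inner_comm u w]
    ring
  linarith

variable [DecidableEq ι]

lemma expect_inner_norm_rademacherSum_pow_smul_le (v : ι → E) (i : ι) (k : ℕ) :
    𝔼 σ, ⟪boolSign (σ i) • v i, ‖rademacherSum v σ‖ ^ (2 * k) • rademacherSum v σ⟫ ≤
      (2 * k + 1) * ‖v i‖ ^ 2 * 𝔼 σ, ‖rademacherSum v σ‖ ^ (2 * k) := by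
  rw [Finset.mul_expect]
  refine expect_le_expect_of_add_flipSign_le i fun σ => ?_
  have hdiff :=
    inner_sub_norm_pow_smul_sub_le (rademacherSum v σ) (rademacherSum v (flipSign i σ)) k
  have hnorm : ‖(2 : ℝ) • boolSign (σ i) • v i‖ = 2 * ‖v i‖ := by
    simp [norm_smul, abs_boolSign]
  rw [rademacherSum_sub_flipSign, hnorm, real_inner_smul_left, inner_sub_right] at hdiff
  rw [flipSign_apply_self, boolSign_not, neg_smul, inner_neg_left]
  linarith

lemma expect_norm_rademacherSum_pow_succ_le (v : ι → E) (k : ℕ) :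
    𝔼 σ, ‖rademacherSum v σ‖ ^ (2 * (k + 1)) ≤
      (2 * k + 1) * (∑ i, ‖v i‖ ^ 2) * 𝔼 σ, ‖rademacherSum v σ‖ ^ (2 * k) := by
  have hexpand (σ : ι → Bool) : ‖rademacherSum v σ‖ ^ (2 * (k + 1)) =
      ∑ i, ⟪boolSign (σ i) • v i, ‖rademacherSum v σ‖ ^ (2 * k) • rademacherSum v σ⟫ := by
    rw [← sum_inner, ← rademacherSum, real_inner_smul_right, real_inner_self_eq_norm_sq]
    ring
  simp_rw [hexpand]
  rw [Finset.expect_sum_comm, Finset.mul_sum, Finset.sum_mul]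
  exact Finset.sum_le_sum fun i _ => expect_inner_norm_rademacherSum_pow_smul_le v i k

/-- **Khintchine's inequality**, with the Gaussian constant. For `r = 0` the truncated subtraction
is harmless, as `0‼ = 1`. -/
theorem expect_norm_rademacherSum_pow_le (v : ι → E) (r : ℕ) :
    𝔼 σ, ‖rademacherSum v σ‖ ^ (2 * r) ≤ (2 * r - 1)‼ * (∑ i, ‖v i‖ ^ 2) ^ r := by
  induction r with
  | zero => simp
  | succ r ih =>
    calc 𝔼 σ, ‖rademacherSum v σ‖ ^ (2 * (r + 1))
        ≤ (2 * r + 1) * (∑ i, ‖v i‖ ^ 2) * 𝔼 σ, ‖rademacherSum v σ‖ ^ (2 * r) :=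
          expect_norm_rademacherSum_pow_succ_le v r
      _ ≤ (2 * r + 1) * (∑ i, ‖v i‖ ^ 2) * ((2 * r - 1)‼ * (∑ i, ‖v i‖ ^ 2) ^ r) := by gcongr
      _ = ((2 * r + 1) * (2 * r - 1)‼ : ℕ) * (∑ i, ‖v i‖ ^ 2) ^ (r + 1) := by
        push_cast
        ring
      _ = (2 * (r + 1) - 1)‼ * (∑ i, ‖v i‖ ^ 2) ^ (r + 1) := by
        rw [← Nat.doubleFactorial_add_one, show 2 * (r + 1) - 1 = 2 * r + 1 by lia]

end Khintchine

section MaximalInequality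

variable {ι κ : Type*} [Fintype ι] [DecidableEq ι] [Fintype κ] {E : κ → Type*}
  [∀ p, NormedAddCommGroup (E p)] [∀ p, InnerProductSpace ℝ (E p)]

lemma expect_iSup_norm_rademacherSum_pow_le [Nonempty κ] (v : ∀ p, ι → E p) {V : ℝ}
    (hV : ∀ p, ∑ i, ‖v p i‖ ^ 2 ≤ V) (r : ℕ) :
    (𝔼 σ, ⨆ p, ‖rademacherSum (v p) σ‖) ^ (2 * r) ≤ Fintype.card κ * (r * V) ^ r := by
  have hmax (σ : ι → Bool) : (⨆ p, ‖rademacherSum (v p) σ‖) ^ (2 * r) ≤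
      ∑ p, ‖rademacherSum (v p) σ‖ ^ (2 * r) := by
    obtain ⟨q, hq⟩ := exists_eq_ciSup_of_finite (f := fun p => ‖rademacherSum (v p) σ‖)
    rw [← hq]
    exact Finset.single_le_sum (f := fun p => ‖rademacherSum (v p) σ‖ ^ (2 * r))
      (fun _ _ => by positivity) (Finset.mem_univ q)
  have hmoment (p : κ) : 𝔼 σ, ‖rademacherSum (v p) σ‖ ^ (2 * r) ≤ (r * V) ^ r := by
    have hfact : ((2 * r - 1).doubleFactorial : ℝ) ≤ r ^ r := by
      exact_mod_cast doubleFactorial_two_mul_sub_one_le_pow_self r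
    rw [mul_pow]
    refine (expect_norm_rademacherSum_pow_le (v p) r).trans ?_
    gcongr
    exact hV p
  calc (𝔼 σ, ⨆ p, ‖rademacherSum (v p) σ‖) ^ (2 * r)
      ≤ 𝔼 σ, (⨆ p, ‖rademacherSum (v p) σ‖) ^ (2 * r) :=
        pow_expect_le_expect_pow (fun _ => Real.iSup_nonneg fun _ => norm_nonneg _) _
    _ ≤ 𝔼 σ, ∑ p, ‖rademacherSum (v p) σ‖ ^ (2 * r) :=
        Finset.expect_le_expect fun σ _ => hmax σ
    _ = ∑ p, 𝔼 σ, ‖rademacherSum (v p) σ‖ ^ (2 * r) := Finset.expect_sum_comm ..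
    _ ≤ ∑ _p : κ, (r * V) ^ r := Finset.sum_le_sum fun p _ => hmoment p
    _ = Fintype.card κ * (r * V) ^ r := by simp

theorem expect_iSup_norm_rademacherSum_le [Nontrivial κ] (v : ∀ p, ι → E p) {V : ℝ}
    (hV : ∀ p, ∑ i, ‖v p i‖ ^ 2 ≤ V) :
    𝔼 σ, ⨆ p, ‖rademacherSum (v p) σ‖ ≤
      √(Real.exp 1 * ⌈Real.log (Fintype.card κ)⌉₊ * V) := by
  set r := ⌈Real.log (Fintype.card κ)⌉₊
  have hr : r ≠ 0 :=
    (Nat.ceil_pos.2 (Real.log_pos (by exact_mod_cast Fintype.one_lt_card))).ne'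
  have hcard : (Fintype.card κ : ℝ) ≤ Real.exp 1 ^ r := by
    rw [← Real.exp_nat_mul, mul_one]
    exact (Real.log_le_iff_le_exp (by exact_mod_cast Fintype.card_pos)).1 (Nat.le_ceil _)
  have hV_nonneg : 0 ≤ V :=
    (Finset.sum_nonneg fun _ _ => by positivity).trans (hV (Classical.arbitrary κ))
  refine le_of_pow_le_pow_left₀ (mul_ne_zero two_ne_zero hr) (Real.sqrt_nonneg _) ?_
  calc (𝔼 σ, ⨆ p, ‖rademacherSum (v p) σ‖) ^ (2 * r)
      ≤ Fintype.card κ * (r * V) ^ r := expect_iSup_norm_rademacherSum_pow_le v hV r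
    _ ≤ Real.exp 1 ^ r * (r * V) ^ r := by gcongr
    _ = √(Real.exp 1 * r * V) ^ (2 * r) := by
      rw [pow_mul, Real.sq_sqrt (by positivity), ← mul_pow, mul_assoc]

end MaximalInequality

lemma empRad_le_expect_div {X : Type*} {N : ℕ} {F : Set (X → ℝ)} {xs : Fin N → X}
    {Z : (Fin N → Bool) → ℝ} (hZ : ∀ σ, 0 ≤ Z σ)
    (hF : ∀ f ∈ F, ∀ σ, rademacherSum (fun n => f (xs n)) σ ≤ Z σ) :
    empRad N F xs ≤ (𝔼 σ, Z σ) / N := by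
  have hsup (σ : Fin N → Bool) :
      sSup ((fun f => rademacherSum (fun n => f (xs n)) σ) '' F) ≤ Z σ :=
    Real.sSup_le (Set.forall_mem_image.2 fun f hf => hF f hf σ) (hZ σ)
  calc empRad N F xs
      = (𝔼 σ, sSup ((fun f => rademacherSum (fun n => f (xs n)) σ) '' F)) / N := by
        rw [Fintype.expect_eq_sum_div_card, div_div, ← one_div_mul_eq_div, mul_comm _ (N : ℝ)]
        simp [empRad, rademacherSum, boolSign]
    _ ≤ (𝔼 σ, Z σ) / N := by
        gcongr with σ
        exact hsup σ

section GroupLasso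

open scoped RealInnerProductSpace

variable {X κ : Type*} [Fintype κ] {E : κ → Type*} [∀ p, NormedAddCommGroup (E p)]
  [∀ p, InnerProductSpace ℝ (E p)]

/-- The group-lasso ball of radius `C`: the linear predictors in the features `Φ p` whose weights
have mixed `ℓ¹`-`ℓ²` norm at most `C`. It is the form of `FhatM` in which the simplex weights have
been absorbed into the coefficients. -/
def groupLassoBall (Φ : ∀ p, X → E p) (C : ℝ) : Set (X → ℝ) :=
  {f | ∃ w : ∀ p, E p, ∑ p, ‖w p‖ ≤ C ∧ ∀ x, f x = ∑ p, ⟪w p, Φ p x⟫}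

lemma rademacherSum_le_of_mem_groupLassoBall {ι : Type*} [Fintype ι] {Φ : ∀ p, X → E p} {C : ℝ}
    {f : X → ℝ} (hf : f ∈ groupLassoBall Φ C) (xs : ι → X) (σ : ι → Bool) :
    rademacherSum (fun i => f (xs i)) σ ≤
      C * ⨆ p, ‖rademacherSum (fun i => Φ p (xs i)) σ‖ := by
  obtain ⟨w, hw, hf⟩ := hf
  calc rademacherSum (fun i => f (xs i)) σ
      = ∑ p, rademacherSum (fun i => ⟪w p, Φ p (xs i)⟫) σ := by
        simp only [rademacherSum, hf, Finset.smul_sum]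
        exact Finset.sum_comm
    _ = ∑ p, ⟪w p, rademacherSum (fun i => Φ p (xs i)) σ⟫ := by simp only [rademacherSum_inner]
    _ ≤ ∑ p, ‖w p‖ * ⨆ q, ‖rademacherSum (fun i => Φ q (xs i)) σ‖ := by
        refine Finset.sum_le_sum fun p _ => (real_inner_le_norm _ _).trans ?_
        gcongr
        exact le_ciSup (f := fun q => ‖rademacherSum (fun i => Φ q (xs i)) σ‖)
          (Set.finite_range _).bddAbove p
    _ = (∑ p, ‖w p‖) * ⨆ q, ‖rademacherSum (fun i => Φ q (xs i)) σ‖ :=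
        (Finset.sum_mul ..).symm
    _ ≤ C * ⨆ q, ‖rademacherSum (fun i => Φ q (xs i)) σ‖ :=
        mul_le_mul_of_nonneg_right hw (Real.iSup_nonneg fun _ => norm_nonneg _)

theorem empRad_le_of_subset_groupLassoBall [Nontrivial κ] {N : ℕ} {F : Set (X → ℝ)}
    {Φ : ∀ p, X → E p} {C V : ℝ} {xs : Fin N → X} (hC : 0 ≤ C) (hF : F ⊆ groupLassoBall Φ C)
    (hV : ∀ p, ∑ n, ‖Φ p (xs n)‖ ^ 2 ≤ V) :
    empRad N F xs ≤ C * √(Real.exp 1 * ⌈Real.log (Fintype.card κ)⌉₊ * V) / N := by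
  calc empRad N F xs
      ≤ (𝔼 σ, C * ⨆ p, ‖rademacherSum (fun n => Φ p (xs n)) σ‖) / N :=
        empRad_le_expect_div (fun _ => mul_nonneg hC (Real.iSup_nonneg fun _ => norm_nonneg _))
          fun f hf => rademacherSum_le_of_mem_groupLassoBall (hF hf) xs
    _ ≤ C * √(Real.exp 1 * ⌈Real.log (Fintype.card κ)⌉₊ * V) / N := by
        rw [← Finset.mul_expect]
        gcongr
        exact expect_iSup_norm_rademacherSum_le (fun p n => Φ p (xs n)) hV

end GroupLasso

section Truncation

/-- The vector of Euclidean space formed by the first `M` terms of a sequence. -/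
noncomputable def euclideanTruncation (M : ℕ) (a : ℕ → ℝ) : EuclideanSpace ℝ (Fin M) :=
  WithLp.toLp 2 fun m => a m

open scoped RealInnerProductSpace

lemma inner_euclideanTruncation (M : ℕ) (a b : ℕ → ℝ) :
    ⟪euclideanTruncation M a, euclideanTruncation M b⟫ = ∑ m ∈ Finset.range M, a m * b m := by
  rw [← Fin.sum_univ_eq_sum_range fun m => a m * b m]
  simp [euclideanTruncation, PiLp.inner_apply, mul_comm]

lemma norm_sq_euclideanTruncation (M : ℕ) (a : ℕ → ℝ) :
    ‖euclideanTruncation M a‖ ^ 2 = ∑ m ∈ Finset.range M, a m ^ 2 := by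
  rw [← real_inner_self_eq_norm_sq, inner_euclideanTruncation]
  simp only [sq]

end Truncation

lemma sum_norm_sqrt_smul_le {κ E : Type*} [Fintype κ] [NormedAddCommGroup E] [NormedSpace ℝ E]
    {ν : κ → ℝ} (hν : ∀ p, 0 ≤ ν p) (hν_sum : ∑ p, ν p = 1) (u : κ → E) :
    ∑ p, ‖√(ν p) • u p‖ ≤ √(∑ p, ‖u p‖ ^ 2) := by
  simpa [norm_smul, abs_of_nonneg, hν, hν_sum] using
    Real.sum_mul_le_sqrt_mul_sqrt Finset.univ (fun p => √(ν p)) fun p => ‖u p‖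

lemma FhatM_subset_groupLassoBall {X : Type*} {P : ℕ} (φ : Fin P → ℕ → X → ℝ) {C : ℝ}
    (hC : 0 ≤ C) (M : ℕ) :
    FhatM P φ C M ⊆ groupLassoBall (fun p x => euclideanTruncation M fun m => φ p m x) C := by
  rintro f ⟨Mp, θ, ν, hM, hν, hν_sum, hθ, hf⟩
  have hMp (p : Fin P) : Mp p ≤ M :=
    hM ▸ Finset.single_le_sum (fun _ _ => Nat.zero_le _) (Finset.mem_univ p)
  have hrange (p : Fin P) (g : ℕ → ℝ) :
      ∑ m ∈ Finset.range M, (if m < Mp p then g m else 0) = ∑ m ∈ Finset.range (Mp p), g m := by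
    rw [← Finset.sum_filter]
    congr 1
    ext m
    grind
  let u (p : Fin P) := euclideanTruncation M fun m => if m < Mp p then θ p m else 0
  have hu : ∑ p, ‖u p‖ ^ 2 ≤ C ^ 2 := by
    simpa only [u, norm_sq_euclideanTruncation, ite_pow, zero_pow two_ne_zero, hrange] using hθ
  refine ⟨fun p => √(ν p) • u p, ?_, fun x => ?_⟩
  · exact (sum_norm_sqrt_smul_le hν hν_sum u).trans (Real.sqrt_le_iff.2 ⟨hC, hu⟩)
  · rw [hf]
    refine Finset.sum_congr rfl fun p _ => ?_
    simp only [u, real_inner_smul_left, inner_euclideanTruncation, ite_mul, zero_mul, hrange,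
      Finset.mul_sum]
    exact Finset.sum_congr rfl fun m _ => by ring

lemma sqrt_mul_mul_sq_div_self {b c : ℝ} (hb : 0 ≤ b) (hc : 0 ≤ c) (a : ℝ) :
    √(a * (c * b ^ 2)) / c = b * √(a / c) := by
  rcases hc.eq_or_lt with rfl | hc
  · simp
  rw [show a * (c * b ^ 2) = (c * b) ^ 2 * (a / c) by field_simp, Real.sqrt_mul (by positivity),
    Real.sqrt_sq (by positivity)]
  field_simp

theorem rademacher_bound_FhatM_general {X : Type*} (P M N : ℕ) (hP : 2 ≤ P)
    (φ : Fin P → ℕ → X → ℝ) (B C : ℝ) (hB : 0 ≤ B) (hC : 0 ≤ C) (xs : Fin N → X)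
    (hφB : ∀ p, ∑ n, ∑ m ∈ Finset.range M, φ p m (xs n) ^ 2 ≤ N * B ^ 2) :
    empRad N (FhatM P φ C M) xs ≤ B * C * √(3 * (⌈Real.log P⌉ : ℤ) / N) := by
  have : Nontrivial (Fin P) := Fin.nontrivial_iff_two_le.2 hP
  calc empRad N (FhatM P φ C M) xs
      ≤ C * √(Real.exp 1 * ⌈Real.log (Fintype.card (Fin P))⌉₊ * (N * B ^ 2)) / N :=
        empRad_le_of_subset_groupLassoBall hC (FhatM_subset_groupLassoBall φ hC M)
          (by simpa only [norm_sq_euclideanTruncation] using hφB)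
    _ ≤ C * √(3 * (⌈Real.log P⌉ : ℤ) * (N * B ^ 2)) / N := by
        rw [Fintype.card_fin, natCast_ceil_eq_intCast_ceil (Real.log_natCast_nonneg P)]
        gcongr
        exact Real.exp_one_lt_three.le
    _ = B * C * √(3 * (⌈Real.log P⌉ : ℤ) / N) := by
        rw [mul_div_assoc, sqrt_mul_mul_sq_div_self hB N.cast_nonneg]
        ring

/-- **Lemma 1**: for `P ≥ 2` and any sample `x_1, …, x_N`, the empirical Rademacher
complexity of `F̂_M` is at most `B·C·√(3⌈log P⌉/N)`. -/
theorem rademacher_bound_FhatM {X : Type*} (P M N : ℕ) (hP : 2 ≤ P)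
    (φ : Fin P → ℕ → X → ℝ) (B C : ℝ) (hB : 0 ≤ B) (hC : 0 ≤ C)
    (hφsum : ∀ p x, Summable fun m => (φ p m x) ^ 2)
    (hφB : ∀ p x, (∑' m, (φ p m x) ^ 2) ≤ B ^ 2)
    (xs : Fin N → X) :
    empRad N (FhatM P φ C M) xs ≤
      B * C * Real.sqrt (3 * ((⌈Real.log (P : ℝ)⌉ : ℤ) : ℝ) / N) := by
  refine rademacher_bound_FhatM_general P M N hP φ B C hB hC xs fun p => ?_
  refine (Finset.sum_le_card_nsmul _ _ (B ^ 2) fun n _ => ?_).trans_eq (by simp)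
  exact ((hφsum p (xs n)).sum_le_tsum _ fun _ _ => sq_nonneg _).trans (hφB p (xs n))
end

section
/- Fix samples x_1,…,x_N ∈ X and an integer r ≥ 1, and for p ∈ {1,…,P}, m ≤ M_p let ψ_{p,m} ∈ ℝ^N denote the vector (φ_{p,m}(x_1),…,φ_{p,m}(x_N)). Suppose that for every allocation (M_1,…,M_P) with Σ_p M_p = M and every p, the Rademacher moment bound 2^{−N} Σ_{σ ∈ {−1,1}^N} ( Σ_{m=1}^{M_p} (ψ_{p,m}ᵀσ)² )^r ≤ ((23r/22)·N·B²)^r holds. Then the empirical Rademacher complexity of F̂_M satisfies R̂(F̂_M) ≤ (C·B/√N) · √(23r/22) · P^{1/(2r)}. (This is the moment-to-complexity step in the proof of Lemma 1, obtained via Hölder's and Jensen's inequalities.) -/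
/-!
For a sign vector `σ`, put `S_p(σ) = ∑_{m < M} (ψ_{p,m}ᵀσ)²`. Cauchy–Schwarz bounds the pairing of
`σ` with any `f ∈ F̂_M` by `C · √(∑_p ν_p S_p(σ))`, because no kernel gets more than `M` features,
and the convex combination is at most the `ℓ^r` norm of `(S_p(σ))_p`. The resulting bound no longer
depends on the allocation, on `θ` or on `ν`, so the supremum is gone, and Jensen's inequality moves
the average over `σ` inside the root `1 / (2r)`.
-/

section RealInequalities

variable {ι κ : Type*}

lemma sum_sum_mul_sqrt_mul_le (s : Finset ι) (t : ι → Finset κ) (θ g : ι → κ → ℝ) {ν : ι → ℝ}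
    (hν : ∀ i ∈ s, 0 ≤ ν i) :
    ∑ i ∈ s, ∑ k ∈ t i, θ i k * √(ν i) * g i k ≤
      √(∑ i ∈ s, ∑ k ∈ t i, θ i k ^ 2) * √(∑ i ∈ s, ν i * ∑ k ∈ t i, g i k ^ 2) := by
  have hweight : ∑ i ∈ s, ν i * ∑ k ∈ t i, g i k ^ 2 =
      ∑ i ∈ s, ∑ k ∈ t i, (√(ν i) * g i k) ^ 2 :=
    Finset.sum_congr rfl fun i hi => by simp only [mul_pow, Real.sq_sqrt (hν i hi), Finset.mul_sum]
  simp only [hweight, mul_assoc, Finset.sum_sigma']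
  exact Real.sum_mul_le_sqrt_mul_sqrt _ _ _

variable {s : Finset ι} {a : ι → ℝ} {r : ℝ}

lemma le_rpow_sum_rpow (ha : ∀ i ∈ s, 0 ≤ a i) (hr : 0 < r) {j : ι} (hj : j ∈ s) :
    a j ≤ (∑ i ∈ s, a i ^ r) ^ (1 / r) := by
  have hpow : ∀ i ∈ s, 0 ≤ a i ^ r := fun i hi => Real.rpow_nonneg (ha i hi) r
  rw [one_div, Real.le_rpow_inv_iff_of_pos (ha j hj) (Finset.sum_nonneg hpow) hr]
  exact Finset.single_le_sum hpow hj

lemma sum_mul_le_rpow_sum_rpow {w : ι → ℝ} (hw : ∀ i ∈ s, 0 ≤ w i) (hw_sum : ∑ i ∈ s, w i ≤ 1)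
    (ha : ∀ i ∈ s, 0 ≤ a i) (hr : 0 < r) :
    ∑ i ∈ s, w i * a i ≤ (∑ i ∈ s, a i ^ r) ^ (1 / r) := by
  have hnorm : 0 ≤ (∑ i ∈ s, a i ^ r) ^ (1 / r) :=
    Real.rpow_nonneg (Finset.sum_nonneg fun i hi => Real.rpow_nonneg (ha i hi) r) _
  calc ∑ i ∈ s, w i * a i
      ≤ ∑ i ∈ s, w i * (∑ i ∈ s, a i ^ r) ^ (1 / r) :=
        Finset.sum_le_sum fun i hi =>
          mul_le_mul_of_nonneg_left (le_rpow_sum_rpow ha hr hi) (hw i hi)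
    _ = (∑ i ∈ s, w i) * (∑ i ∈ s, a i ^ r) ^ (1 / r) := (Finset.sum_mul ..).symm
    _ ≤ (∑ i ∈ s, a i ^ r) ^ (1 / r) := mul_le_of_le_one_left hnorm hw_sum

lemma sqrt_rpow_one_div {x : ℝ} (hx : 0 ≤ x) (r : ℝ) :
    √(x ^ (1 / r)) = x ^ (1 / (2 * r)) := by
  rw [Real.sqrt_eq_rpow, ← Real.rpow_mul hx, one_div_mul_one_div, mul_comm r]

lemma sqrt_mul_natCast_mul_sq_div {c B : ℝ} (hc : 0 ≤ c) (hB : 0 ≤ B) (N : ℕ) :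
    √(c * N * B ^ 2) / N = B / √N * √c := by
  rw [Real.sqrt_mul (by positivity), Real.sqrt_mul hc, Real.sqrt_sq hB, mul_right_comm,
    mul_div_assoc, Real.sqrt_div_self']
  ring

end RealInequalities

/-- The vector in `{-1, 1}^ι` encoded by `σ`, with `true` standing for `1`; the pairing `ψᵀσ` of the
paper is `signVector σ ⬝ᵥ ψ`. -/
def signVector {ι : Type*} (σ : ι → Bool) : ι → ℝ :=
  fun i => if σ i then 1 else -1

/-- The quantity `∑_{m < k} (ψ_{p,m}ᵀσ)²`, where `ψ_{p,m}` is the vector of values of the `m`-th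
feature of the `p`-th kernel on the sample `xs`. -/
def featureEnergy {X ι : Type*} {N : ℕ} (φ : ι → ℕ → X → ℝ) (xs : Fin N → X) (k : ℕ)
    (σ : Fin N → Bool) (p : ι) : ℝ :=
  ∑ m ∈ Finset.range k, (signVector σ ⬝ᵥ (φ p m ∘ xs)) ^ 2

section FeatureEnergy

variable {X ι : Type*} {N : ℕ} (φ : ι → ℕ → X → ℝ) (xs : Fin N → X) (σ : Fin N → Bool) (p : ι)

lemma featureEnergy_nonneg (k : ℕ) : 0 ≤ featureEnergy φ xs k σ p :=
  Finset.sum_nonneg fun _ _ => sq_nonneg _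

lemma featureEnergy_mono : Monotone fun k => featureEnergy φ xs k σ p := fun _ _ h =>
  Finset.sum_le_sum_of_subset_of_nonneg (Finset.range_mono h) fun _ _ _ => sq_nonneg _

lemma sum_featureEnergy_rpow_nonneg [Fintype ι] (k : ℕ) (r : ℝ) :
    0 ≤ ∑ p, featureEnergy φ xs k σ p ^ r :=
  Finset.sum_nonneg fun p _ => Real.rpow_nonneg (featureEnergy_nonneg φ xs σ p k) r

end FeatureEnergy

section RademacherComplexity

variable {X : Type*} {P M N : ℕ} {C r : ℝ}

lemma empRad_le_of_forall_le {F : Set (X → ℝ)} {xs : Fin N → X} {b : (Fin N → Bool) → ℝ}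
    (hb : ∀ σ, 0 ≤ b σ) (hF : ∀ σ, ∀ f ∈ F, signVector σ ⬝ᵥ (f ∘ xs) ≤ b σ) :
    empRad N F xs ≤ 1 / (N * 2 ^ N) * ∑ σ, b σ :=
  mul_le_mul_of_nonneg_left
    (Finset.sum_le_sum fun σ _ => Real.sSup_le (Set.forall_mem_image.2 (hF σ)) (hb σ))
    (by positivity)

lemma mean_signs_le_rpow_mean_signs {z : (Fin N → Bool) → ℝ} (hz : ∀ σ, 0 ≤ z σ) (hr : 1 ≤ r) :
    1 / 2 ^ N * ∑ σ, z σ ≤ (1 / 2 ^ N * ∑ σ, z σ ^ r) ^ (1 / r) := by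
  simpa only [Finset.mul_sum] using Real.arith_mean_le_rpow_mean Finset.univ
    (fun _ : Fin N → Bool => 1 / 2 ^ N) z (fun _ _ => by positivity) (by simp) (fun σ _ => hz σ) hr

variable {φ : Fin P → ℕ → X → ℝ} {f : X → ℝ}

lemma signVector_dotProduct_le_of_mem_FhatM (hC : 0 ≤ C) (hr : 0 < r) (xs : Fin N → X)
    (hf : f ∈ FhatM P φ C M) (σ : Fin N → Bool) :
    signVector σ ⬝ᵥ (f ∘ xs) ≤ C * (∑ p, featureEnergy φ xs M σ p ^ r) ^ (1 / (2 * r)) := by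
  obtain ⟨Mp, θ, ν, hMp, hν, hν_sum, hθ, hf⟩ := hf
  have hf_comp : f ∘ xs = ∑ p, ∑ m ∈ Finset.range (Mp p), (θ p m * √(ν p)) • (φ p m ∘ xs) := by
    ext n
    simp [hf]
  have hMp_le (p : Fin P) : Mp p ≤ M :=
    hMp ▸ Finset.single_le_sum (fun _ _ => Nat.zero_le _) (Finset.mem_univ p)
  have hconvex : ∑ p, ν p * featureEnergy φ xs (Mp p) σ p ≤
      (∑ p, featureEnergy φ xs M σ p ^ r) ^ (1 / r) :=
    (Finset.sum_le_sum fun p _ => mul_le_mul_of_nonneg_left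
      (featureEnergy_mono φ xs σ p (hMp_le p)) (hν p)).trans <|
    sum_mul_le_rpow_sum_rpow (fun p _ => hν p) hν_sum.le
      (fun p _ => featureEnergy_nonneg φ xs σ p M) hr
  calc signVector σ ⬝ᵥ (f ∘ xs)
      = ∑ p, ∑ m ∈ Finset.range (Mp p),
          θ p m * √(ν p) * (signVector σ ⬝ᵥ (φ p m ∘ xs)) := by
        simp only [hf_comp, dotProduct_sum, dotProduct_smul, smul_eq_mul]
    _ ≤ √(∑ p, ∑ m ∈ Finset.range (Mp p), θ p m ^ 2) *
          √(∑ p, ν p * featureEnergy φ xs (Mp p) σ p) :=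
        sum_sum_mul_sqrt_mul_le _ _ θ _ fun p _ => hν p
    _ ≤ C * √((∑ p, featureEnergy φ xs M σ p ^ r) ^ (1 / r)) :=
        mul_le_mul (Real.sqrt_le_iff.2 ⟨hC, hθ⟩) (Real.sqrt_le_sqrt hconvex)
          (Real.sqrt_nonneg _) hC
    _ = C * (∑ p, featureEnergy φ xs M σ p ^ r) ^ (1 / (2 * r)) := by
        rw [sqrt_rpow_one_div (sum_featureEnergy_rpow_nonneg φ xs σ M r)]

lemma empRad_FhatM_le (hC : 0 ≤ C) (hr : 1 / 2 ≤ r) (xs : Fin N → X) :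
    empRad N (FhatM P φ C M) xs ≤
      C / N * (∑ p, 1 / 2 ^ N * ∑ σ, featureEnergy φ xs M σ p ^ r) ^ (1 / (2 * r)) := by
  set T : (Fin N → Bool) → ℝ := fun σ => ∑ p, featureEnergy φ xs M σ p ^ r
  have hT (σ) : 0 ≤ T σ := sum_featureEnergy_rpow_nonneg φ xs σ M r
  have hroot (σ) : 0 ≤ T σ ^ (1 / (2 * r)) := Real.rpow_nonneg (hT σ) _
  have hroot_pow (σ) : (T σ ^ (1 / (2 * r))) ^ (2 * r) = T σ := by
    rw [one_div, Real.rpow_inv_rpow (hT σ) (by linarith)]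
  calc empRad N (FhatM P φ C M) xs
      ≤ 1 / (N * 2 ^ N) * ∑ σ, C * T σ ^ (1 / (2 * r)) :=
        empRad_le_of_forall_le (fun σ => mul_nonneg hC (hroot σ)) fun σ _ hf =>
          signVector_dotProduct_le_of_mem_FhatM hC (by linarith) xs hf σ
    _ = C / N * (1 / 2 ^ N * ∑ σ, T σ ^ (1 / (2 * r))) := by
        rw [← Finset.mul_sum, one_div_mul_eq_div]
        ring
    _ ≤ C / N * (1 / 2 ^ N * ∑ σ, (T σ ^ (1 / (2 * r))) ^ (2 * r)) ^ (1 / (2 * r)) :=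
        mul_le_mul_of_nonneg_left (mean_signs_le_rpow_mean_signs hroot (by linarith))
          (by positivity)
    _ = C / N * (∑ p, 1 / 2 ^ N * ∑ σ, featureEnergy φ xs M σ p ^ r) ^ (1 / (2 * r)) := by
        simp only [hroot_pow, T]
        rw [Finset.sum_comm, Finset.mul_sum]

theorem rademacher_of_moment_bound_general {A : ℝ} (hA : 0 ≤ A) (hC : 0 ≤ C) (hr : 1 / 2 ≤ r)
    (xs : Fin N → X)
    (hmoment : ∀ p, 1 / 2 ^ N * ∑ σ, featureEnergy φ xs M σ p ^ r ≤ A ^ r) :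
    empRad N (FhatM P φ C M) xs ≤ C * (√A / N) * (P : ℝ) ^ (1 / (2 * r)) := by
  have hr_pos : 0 < r := by linarith
  have hsum_nonneg : 0 ≤ ∑ p, 1 / 2 ^ N * ∑ σ, featureEnergy φ xs M σ p ^ r :=
    Finset.sum_nonneg fun p _ => mul_nonneg (by positivity) <| Finset.sum_nonneg fun σ _ =>
      Real.rpow_nonneg (featureEnergy_nonneg φ xs σ p M) r
  have hsum : ∑ p, 1 / 2 ^ N * ∑ σ, featureEnergy φ xs M σ p ^ r ≤ P * A ^ r :=
    (Finset.sum_le_sum fun p _ => hmoment p).trans_eq (by simp)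
  have hroot : (A ^ r) ^ (1 / (2 * r)) = √A := by
    rw [← sqrt_rpow_one_div (by positivity), one_div, Real.rpow_rpow_inv hA hr_pos.ne']
  calc empRad N (FhatM P φ C M) xs
      ≤ C / N * (∑ p, 1 / 2 ^ N * ∑ σ, featureEnergy φ xs M σ p ^ r) ^ (1 / (2 * r)) :=
        empRad_FhatM_le hC hr xs
    _ ≤ C / N * (P * A ^ r) ^ (1 / (2 * r)) := by gcongr
    _ = C * (√A / N) * (P : ℝ) ^ (1 / (2 * r)) := by
        rw [Real.mul_rpow (by positivity) (by positivity), hroot]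
        ring

end RademacherComplexity

/-- The moment-to-complexity step in the proof of Lemma 1: if for every allocation
`(M_1,…,M_P)` with `∑_p M_p = M` and every `p` the Rademacher moment bound
`2^{-N} ∑_σ (∑_{m<M_p} (ψ_{p,m}ᵀσ)²)^r ≤ ((23r/22)·N·B²)^r` holds, then the empirical
Rademacher complexity of `F̂_M` is at most `(C·B/√N)·√(23r/22)·P^{1/(2r)}`. -/
theorem rademacher_of_moment_bound {X : Type*} (P M N : ℕ)
    (φ : Fin P → ℕ → X → ℝ) (B C : ℝ) (hB : 0 ≤ B) (hC : 0 ≤ C)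
    (xs : Fin N → X) (r : ℕ) (hr : 1 ≤ r)
    (hmoment : ∀ Mp : Fin P → ℕ, (∑ p, Mp p) = M → ∀ p,
      (1 / (2 ^ N : ℝ)) *
          ∑ σ : Fin N → Bool,
            (∑ m ∈ Finset.range (Mp p),
                (∑ n, (if σ n then (1 : ℝ) else -1) * φ p m (xs n)) ^ 2) ^ r ≤
        ((23 * (r : ℝ) / 22) * N * B ^ 2) ^ r) :
    empRad N (FhatM P φ C M) xs ≤
      (C * B / Real.sqrt N) * Real.sqrt (23 * (r : ℝ) / 22) *
        (P : ℝ) ^ ((1 : ℝ) / (2 * r)) := by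
  have h := rademacher_of_moment_bound_general (A := 23 * (r : ℝ) / 22 * N * B ^ 2) (by positivity)
    hC (one_half_lt_one.le.trans (Nat.one_le_cast.2 hr)) xs fun p => by
      simpa [featureEnergy, signVector, dotProduct] using hmoment (Pi.single p M) (by simp) p
  rwa [sqrt_mul_natCast_mul_sq_div (by positivity) hB, ← mul_assoc, ← mul_div_assoc] at h
end

section
/- Let P_{XY} be a probability measure on X × Y and let L : ℝ × Y → ℝ be a loss function that is G-Lipschitz in its first argument, i.e. |L(a,y) − L(b,y)| ≤ G|a−b| for all a,b ∈ ℝ, y ∈ Y; define the risk R(f) = E_{P_{XY}}[L(f(x),y)] (assuming the relevant functions are measurable and the losses integrable). Let f⋆, f̃, M_min, and θ⋆ be as follows: θ⋆ has Σ_{p,m} (θ⋆_{p,m})² ≤ C², ν ∈ Δ_P, f⋆(x) = Σ_{p=1}^P Σ_{m=1}^∞ θ⋆_{p,m} √(ν_p) φ_{p,m}(x), f̃(x) = Σ_{p=1}^P Σ_{m=1}^{M_p} θ⋆_{p,m} √(ν_p) φ_{p,m}(x), and M_min = min_p M_p. Then under Assumption 1, R(f̃) − R(f⋆) ≤ G·B·√(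 Σ_{p=1}^P Σ_{m=M_min}^∞ (θ⋆_{p,m})² ). (This is the spectral-error bound (11) in the proof of Theorem 1.) -/
open MeasureTheory

/-!
At each point `x`, the predictors `f⋆` and `f̃` differ by
`∑ p, √ν_p ∑_{m ≥ M_p} θ_{p,m} φ_{p,m}(x)`. Cauchy–Schwarz in `m` bounds each tail by the `ℓ²` tail
of `θ_p` times `‖φ_p(x)‖`. Cauchy–Schwarz in `p` then puts the factor
`√(∑ p, ν_p ‖φ_p(x)‖²) = √K_ν(x, x)` in front of the total tail, where `K_ν = ∑ p, ν_p K_p` is the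
combined kernel. The Lipschitz loss turns this pointwise bound into a bound on the risks, and
`K_ν(x, x) ≤ B²` because it is a convex combination of the `K_p(x, x)`.
-/

section SquareSummable

variable {ι : Type*} {f g : ι → ℝ}

theorem summable_mul_of_summable_sq (hf : Summable fun i => f i ^ 2)
    (hg : Summable fun i => g i ^ 2) : Summable fun i => f i * g i := by
  refine Summable.of_abs ?_
  simpa only [abs_mul] using
    Real.summable_mul_of_Lp_Lq_of_nonneg .two_two (fun i => abs_nonneg (f i))
      (fun i => abs_nonneg (g i)) (by simpa using hf) (by simpa using hg)

theorem abs_tsum_mul_le_sqrt_mul_sqrt (hf : Summable fun i => f i ^ 2)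
    (hg : Summable fun i => g i ^ 2) :
    |∑' i, f i * g i| ≤ √(∑' i, f i ^ 2) * √(∑' i, g i ^ 2) :=
  calc |∑' i, f i * g i|
      ≤ ∑' i, |f i| * |g i| := by
        simpa only [Real.norm_eq_abs, abs_mul] using
          norm_tsum_le_tsum_norm (summable_mul_of_summable_sq hf hg).norm
    _ ≤ √(∑' i, f i ^ 2) * √(∑' i, g i ^ 2) := by
        simpa [Real.sqrt_eq_rpow] using
          Real.inner_le_Lp_mul_Lq_tsum_of_nonneg .two_two (fun i => abs_nonneg (f i))
            (fun i => abs_nonneg (g i)) (by simpa using hf) (by simpa using hg)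

theorem abs_sum_sub_tsum_mul_le (hf : Summable fun i => f i ^ 2)
    (hg : Summable fun i => g i ^ 2) (s : Finset ι) :
    |∑ i ∈ s, f i * g i - ∑' i, f i * g i| ≤
      √(∑' i : ((s : Set ι)ᶜ : Set ι), f i ^ 2) * √(∑' i, g i ^ 2) := by
  rw [← (summable_mul_of_summable_sq hf hg).sum_add_tsum_compl (s := s), sub_add_cancel_left,
    abs_neg]
  refine (abs_tsum_mul_le_sqrt_mul_sqrt (hf.subtype _) (hg.subtype _)).trans ?_
  gcongr
  exact hg.tsum_subtype_le _ _ fun i => sq_nonneg (g i)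

end SquareSummable

/-- The squared `ℓ²` norm of the tail of `a` left out by truncating at `M`. Sequences are indexed
from `0`, so the truncation keeps the `M` indices `m < M` and the tail starts at `M` itself. -/
noncomputable def tailEnergy (a : ℕ → ℝ) (M : ℕ) : ℝ :=
  ∑' m, if M ≤ m then a m ^ 2 else 0

theorem tailEnergy_eq_tsum_compl_range (a : ℕ → ℝ) (M : ℕ) :
    tailEnergy a M = ∑' m : ((Finset.range M : Set ℕ)ᶜ : Set ℕ), a m ^ 2 := by
  rw [tsum_subtype _ fun m => a m ^ 2]
  simp [tailEnergy, Set.indicator_apply]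

theorem tailEnergy_nonneg (a : ℕ → ℝ) (M : ℕ) : 0 ≤ tailEnergy a M :=
  tsum_nonneg fun m => by positivity

theorem tailEnergy_antitone {a : ℕ → ℝ} (ha : Summable fun m => a m ^ 2) :
    Antitone (tailEnergy a) := by
  intro N M hNM
  simp only [tailEnergy_eq_tsum_compl_range]
  have hsub : (Finset.range M : Set ℕ)ᶜ ⊆ (Finset.range N : Set ℕ)ᶜ := by simpa using hNM
  exact tsum_comp_le_tsum_of_inj (ha.subtype _) (fun _ => sq_nonneg _)
    (Set.inclusion_injective hsub)

section Predictor

variable {X ι : Type*} [Fintype ι]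

/-- The predictor `f⋆` of a multiple kernel model with coefficients `θ`, kernel weights `ν` and
feature maps `φ`. -/
noncomputable def kernelPredictor (θ : ι → ℕ → ℝ) (ν : ι → ℝ) (φ : ι → ℕ → X → ℝ) (x : X) : ℝ :=
  ∑ p, ∑' m, θ p m * √(ν p) * φ p m x

/-- The predictor `f̃`, which keeps only the first `M p` features of the `p`-th kernel. -/
noncomputable def truncatedPredictor (θ : ι → ℕ → ℝ) (ν : ι → ℝ) (φ : ι → ℕ → X → ℝ)
    (M : ι → ℕ) (x : X) : ℝ :=
  ∑ p, ∑ m ∈ Finset.range (M p), θ p m * √(ν p) * φ p m x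

variable {θ : ι → ℕ → ℝ} {ν : ι → ℝ} {φ : ι → ℕ → X → ℝ}

theorem truncatedPredictor_sub_kernelPredictor (M : ι → ℕ) (x : X) :
    truncatedPredictor θ ν φ M x - kernelPredictor θ ν φ x =
      ∑ p, √(ν p) * (∑ m ∈ Finset.range (M p), θ p m * φ p m x - ∑' m, θ p m * φ p m x) := by
  simp only [truncatedPredictor, kernelPredictor, mul_right_comm _ √(ν _), tsum_mul_right,
    ← Finset.sum_mul, ← Finset.sum_sub_distrib, ← sub_mul, mul_comm √(ν _)]

theorem abs_truncatedPredictor_sub_kernelPredictor_le (hθ : ∀ p, Summable fun m => θ p m ^ 2)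
    (hν : ∀ p, 0 ≤ ν p) (M : ι → ℕ) {x : X} (hφ : ∀ p, Summable fun m => φ p m x ^ 2) :
    |truncatedPredictor θ ν φ M x - kernelPredictor θ ν φ x| ≤
      √(∑ p, ν p * ∑' m, φ p m x ^ 2) * √(∑ p, tailEnergy (θ p) (M p)) := by
  have htrunc (p : ι) :
      |∑ m ∈ Finset.range (M p), θ p m * φ p m x - ∑' m, θ p m * φ p m x| ≤
        √(tailEnergy (θ p) (M p)) * √(∑' m, φ p m x ^ 2) := by
    simpa only [tailEnergy_eq_tsum_compl_range] using
      abs_sum_sub_tsum_mul_le (hθ p) (hφ p) (Finset.range (M p))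
  rw [truncatedPredictor_sub_kernelPredictor]
  calc |∑ p, √(ν p) *
          (∑ m ∈ Finset.range (M p), θ p m * φ p m x - ∑' m, θ p m * φ p m x)|
      ≤ ∑ p, √(ν p) *
          |∑ m ∈ Finset.range (M p), θ p m * φ p m x - ∑' m, θ p m * φ p m x| := by
        simpa only [abs_mul, abs_of_nonneg (Real.sqrt_nonneg _)] using
          Finset.abs_sum_le_sum_abs (fun p => √(ν p) *
            (∑ m ∈ Finset.range (M p), θ p m * φ p m x - ∑' m, θ p m * φ p m x)) Finset.univ
    _ ≤ ∑ p, √(ν p) * (√(tailEnergy (θ p) (M p)) * √(∑' m, φ p m x ^ 2)) := by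
        gcongr with p
        exact htrunc p
    _ = ∑ p, √(ν p * ∑' m, φ p m x ^ 2) * √(tailEnergy (θ p) (M p)) := by
        simp only [Real.sqrt_mul (hν _), mul_assoc, mul_comm √(tailEnergy _ _)]
    _ ≤ √(∑ p, ν p * ∑' m, φ p m x ^ 2) * √(∑ p, tailEnergy (θ p) (M p)) :=
        Real.sum_sqrt_mul_sqrt_le _
          (fun p => mul_nonneg (hν p) (tsum_nonneg fun m => sq_nonneg (φ p m x)))
          (fun p => tailEnergy_nonneg (θ p) (M p))

end Predictor

section Risk

variable {X Y : Type*} [MeasurableSpace X] [MeasurableSpace Y]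

/-- The risk `R(f) = E[L(f(x), y)]` of the predictor `f` for the data distribution `μ`. It is `0`
by convention when the loss of `f` is not integrable. -/
noncomputable def risk (μ : Measure (X × Y)) (L : ℝ → Y → ℝ) (f : X → ℝ) : ℝ :=
  ∫ z, L (f z.1) z.2 ∂μ

variable {μ : Measure (X × Y)} [IsProbabilityMeasure μ] {L : ℝ → Y → ℝ} {G : ℝ}

theorem abs_risk_sub_risk_le (hG : 0 ≤ G)
    (hLip : ∀ (a b : ℝ) (y : Y), |L a y - L b y| ≤ G * |a - b|) {f g : X → ℝ}
    (hf : Integrable (fun z : X × Y => L (f z.1) z.2) μ)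
    (hg : Integrable (fun z : X × Y => L (g z.1) z.2) μ)
    {δ : ℝ} (hfg : ∀ᵐ z ∂μ, |f z.1 - g z.1| ≤ δ) :
    |risk μ L f - risk μ L g| ≤ G * δ := by
  have hloss : ∀ᵐ z ∂μ, ‖L (f z.1) z.2 - L (g z.1) z.2‖ ≤ G * δ := by
    filter_upwards [hfg] with z hz
    exact (hLip _ _ _).trans (mul_le_mul_of_nonneg_left hz hG)
  rw [risk, risk, ← integral_sub hf hg]
  simpa using norm_integral_le_of_norm_le_const hloss

theorem risk_truncation_bound_general {ι : Type*} [Fintype ι] (hG : 0 ≤ G)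
    (hLip : ∀ (a b : ℝ) (y : Y), |L a y - L b y| ≤ G * |a - b|)
    {θ : ι → ℕ → ℝ} (hθ : ∀ p, Summable fun m => θ p m ^ 2) {ν : ι → ℝ} (hν : ∀ p, 0 ≤ ν p)
    {φ : ι → ℕ → X → ℝ} (hφ : ∀ p x, Summable fun m => φ p m x ^ 2) {B : ℝ} (hB : 0 ≤ B)
    (hφB : ∀ x, ∑ p, ν p * ∑' m, φ p m x ^ 2 ≤ B ^ 2) (M : ι → ℕ)
    (hIntTrunc : Integrable (fun z : X × Y => L (truncatedPredictor θ ν φ M z.1) z.2) μ)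
    (hInt : Integrable (fun z : X × Y => L (kernelPredictor θ ν φ z.1) z.2) μ) :
    |risk μ L (truncatedPredictor θ ν φ M) - risk μ L (kernelPredictor θ ν φ)| ≤
      G * B * √(∑ p, tailEnergy (θ p) (M p)) := by
  rw [mul_assoc]
  refine abs_risk_sub_risk_le hG hLip hIntTrunc hInt (ae_of_all μ fun z => ?_)
  refine (abs_truncatedPredictor_sub_kernelPredictor_le hθ hν M (hφ · z.1)).trans ?_
  gcongr
  exact Real.sqrt_le_iff.2 ⟨hB, hφB z.1⟩

end Risk

/-- The spectral-error bound (11) in the proof of Theorem 1: with a `G`-Lipschitz loss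
`L` in its first argument, risk `R(f) = E_{P_{XY}}[L(f(x),y)]`, coefficients `θ⋆` with
`∑_{p,m}(θ⋆_{p,m})² ≤ C²`, weights `ν ∈ Δ_P`, limit `f⋆` and its truncation `f̃` with
allocation `(M_1,…,M_P)` of minimum `M_min`, one has, under Assumption 1,
`R(f̃) − R(f⋆) ≤ G·B·√(∑_p ∑_{m ≥ M_min} (θ⋆_{p,m})²)`. -/
theorem risk_truncation_bound {X Y : Type*} [MeasurableSpace X] [MeasurableSpace Y]
    (μ : Measure (X × Y)) [IsProbabilityMeasure μ]
    (L : ℝ → Y → ℝ) (G : ℝ) (hG : 0 ≤ G)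
    (hLip : ∀ (a b : ℝ) (y : Y), |L a y - L b y| ≤ G * |a - b|)
    (P : ℕ) (φ : Fin P → ℕ → X → ℝ) (B C : ℝ) (hB : 0 ≤ B) (hC : 0 ≤ C)
    (hφsum : ∀ p x, Summable fun m => (φ p m x) ^ 2)
    (hφB : ∀ p x, (∑' m, (φ p m x) ^ 2) ≤ B ^ 2)
    (θ : Fin P → ℕ → ℝ) (hθsum : ∀ p, Summable fun m => (θ p m) ^ 2)
    (hθC : (∑ p, ∑' m, (θ p m) ^ 2) ≤ C ^ 2)
    (ν : Fin P → ℝ) (hν0 : ∀ p, 0 ≤ ν p) (hν1 : (∑ p, ν p) = 1)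
    (Mp : Fin P → ℕ) (Mmin : ℕ)
    (hMminLe : ∀ p, Mmin ≤ Mp p) (hMminEq : ∃ p, Mp p = Mmin)
    (fstar ftil : X → ℝ)
    (hfstar : ∀ x, fstar x = ∑ p, ∑' m, θ p m * Real.sqrt (ν p) * φ p m x)
    (hftil : ∀ x, ftil x = ∑ p, ∑ m ∈ Finset.range (Mp p),
        θ p m * Real.sqrt (ν p) * φ p m x)
    (hIntTil : Integrable (fun z : X × Y => L (ftil z.1) z.2) μ)
    (hIntStar : Integrable (fun z : X × Y => L (fstar z.1) z.2) μ) :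
    (∫ z, L (ftil z.1) z.2 ∂μ) - (∫ z, L (fstar z.1) z.2 ∂μ) ≤
      G * B * Real.sqrt (∑ p, ∑' m, if Mmin ≤ m then (θ p m) ^ 2 else 0) := by
  have hKernel (x : X) : ∑ p, ν p * ∑' m, φ p m x ^ 2 ≤ B ^ 2 :=
    (convex_Iic (B ^ 2)).sum_mem (fun p _ => hν0 p) hν1 fun p _ => hφB p x
  obtain rfl : fstar = kernelPredictor θ ν φ := funext hfstar
  obtain rfl : ftil = truncatedPredictor θ ν φ Mp := funext hftil
  calc risk μ L (truncatedPredictor θ ν φ Mp) - risk μ L (kernelPredictor θ ν φ)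
      ≤ G * B * √(∑ p, tailEnergy (θ p) (Mp p)) :=
        (le_abs_self _).trans
          (risk_truncation_bound_general hG hLip hθsum hν0 hφsum hB hKernel Mp hIntTil hIntStar)
    _ ≤ G * B * √(∑ p, tailEnergy (θ p) Mmin) := by
        gcongr with p
        exact tailEnergy_antitone (hθsum p) (hMminLe p)
end

section
/- Fully corrective greedy convergence (Theorem 2 of the paper, with the logarithmic factor the paper disregards made explicit): Let R̂ : ℝ^{M₀} → ℝ be differentiable, μ-strongly convex and such that the pointwise loss it averages is convex and β-smooth (in particular R̂ is β'-smooth along coordinates with β' ≤ β). Let the iterates (θ^{(t)})_{t≥0} and supports (I^{(t)})_{t≥1} be generated by the fully corrective greedy scheme: θ^{(0)} = 0, I^{(1)} = ∅, and for each t ≥ 1, J^{(t)} maximizes |⟨∇R̂(θ^{(t−1)}), e_j⟩| over j ∈ {1,…,M₀}, I^{(t+1)} = I^{(t)} ∪ {J^{(t)}}, and θ^{(t)} minimizes R̂ over {θ ∈ ℝ^{M₀} : supp(θ) ⊆ I^{(t+1)}}. Then for every ε > 0 and every θ̄ ∈ ℝ^{M₀}, if t ≥ ‖θ̄‖₀ ·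 (β/μ) · log( (R̂(0) − R̂(θ̄))/ε ), the iterate satisfies R̂(θ^{(t)}) − R̂(θ̄) ≤ ε, where ‖θ̄‖₀ is the number of nonzero entries of θ̄. -/
open scoped RealInnerProductSpace

/-! If `x` minimizes `f` over the vectors supported on `S`, then `∇f x` vanishes on `S`, so strong
convexity, minimized coordinate by coordinate, bounds the gap `f x - f y` by
`‖y‖₀ (max_j |∂_j f x|)² / (2μ)`: the entries of `x` outside the support of `y` cost nothing.
A single step along the greedy coordinate already decreases `f` by `(max_j |∂_j f x|)² / (2β)`.
Hence each gap `δ t` is at most `‖y‖₀ (β / μ)` times the decrease `δ t - δ (t + 1)`, and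
`1 - δ (t + 1) / δ t ≤ log (δ t / δ (t + 1))` telescopes. -/

section RelativeDecrease

variable {δ : ℕ → ℝ} {C : ℝ}

theorem natCast_le_mul_log_div_of_le_mul_sub_succ (hC : 0 ≤ C) (hanti : Antitone δ)
    (hδ : ∀ s, δ s ≤ C * (δ s - δ (s + 1))) {t : ℕ} (ht : 0 < δ t) :
    (t : ℝ) ≤ C * Real.log (δ 0 / δ t) := by
  induction t with
  | zero => simp [div_self ht.ne']
  | succ t ih =>
    have hpos : 0 < δ t := ht.trans_le (hanti t.le_succ)
    have hpos₀ : 0 < δ 0 := hpos.trans_le (hanti t.zero_le)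
    have hstep : 1 ≤ C * Real.log (δ t / δ (t + 1)) := calc
      1 ≤ C * (δ t - δ (t + 1)) / δ t := (one_le_div hpos).2 (hδ t)
      _ = C * (1 - (δ t / δ (t + 1))⁻¹) := by field_simp
      _ ≤ C * Real.log (δ t / δ (t + 1)) := by
        gcongr
        exact Real.one_sub_inv_le_log_of_pos (div_pos hpos ht)
    calc ((t + 1 : ℕ) : ℝ) = t + 1 := Nat.cast_succ t
      _ ≤ C * Real.log (δ 0 / δ t) + C * Real.log (δ t / δ (t + 1)) := add_le_add (ih hpos) hstep
      _ = C * Real.log (δ 0 / δ (t + 1)) := by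
        rw [← mul_add, ← Real.log_mul (div_pos hpos₀ hpos).ne' (div_pos hpos ht).ne',
          div_mul_div_cancel₀ hpos.ne']

theorem le_of_le_mul_sub_succ_of_mul_log_div_le (hC : 0 ≤ C) (hanti : Antitone δ)
    (hδ : ∀ s, δ s ≤ C * (δ s - δ (s + 1))) {ε : ℝ} (hε : 0 < ε) {t : ℕ}
    (ht : C * Real.log (δ 0 / ε) ≤ t) : δ t ≤ ε := by
  by_contra! hlt
  have hpos : 0 < δ t := hε.trans hlt
  have hpos₀ : 0 < δ 0 := hpos.trans_le (hanti t.zero_le)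
  have hC' : 0 < C := hC.lt_of_ne fun h => hpos.not_ge (by simpa [← h] using hδ t)
  have hlog : Real.log (δ 0 / δ t) < Real.log (δ 0 / ε) :=
    Real.log_lt_log (div_pos hpos₀ hpos) (div_lt_div_of_pos_left hpos₀ hε hlt)
  have hle := ht.trans (natCast_le_mul_log_div_of_le_mul_sub_succ hC hanti hδ hpos)
  exact hle.not_gt (mul_lt_mul_of_pos_left hlog hC')

end RelativeDecrease

theorem neg_sq_div_le_mul_add_sq {μ : ℝ} (hμ : 0 < μ) (a b : ℝ) :
    -(a ^ 2 / (2 * μ)) ≤ a * b + μ / 2 * b ^ 2 := by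
  have hsquare : a * b + μ / 2 * b ^ 2 + a ^ 2 / (2 * μ) = (μ * b + a) ^ 2 / (2 * μ) := by
    field_simp
    ring
  have hnonneg : 0 ≤ (μ * b + a) ^ 2 / (2 * μ) := by positivity
  linarith

section Coordinates

variable {ι : Type*}

/-- The coordinate subspace of vectors `x` with `supp x ⊆ S`, over which the corrective step
minimizes; only its underlying set is needed. -/
def coordinateSubspace (S : Set ι) : Set (EuclideanSpace ℝ ι) :=
  {x | ∀ j, x j ≠ 0 → j ∈ S}

/-- `x` is a minimizer of `f` over the vectors supported on `S`: the defining property of an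
iterate of the fully corrective scheme. Minimizers need not be unique. -/
structure MinimizesOnSupport (f : EuclideanSpace ℝ ι → ℝ) (S : Set ι)
    (x : EuclideanSpace ℝ ι) : Prop where
  mem : x ∈ coordinateSubspace S
  isMinOn : IsMinOn f (coordinateSubspace S) x

theorem coordinateSubspace_mono {S T : Set ι} (h : S ⊆ T) :
    coordinateSubspace S ⊆ coordinateSubspace T :=
  fun _ hx j hj => h (hx j hj)

theorem coordinateSubspace_empty : coordinateSubspace (∅ : Set ι) = {0} := by
  ext x
  simp [coordinateSubspace, PiLp.ext_iff]

theorem minimizesOnSupport_empty_zero (f : EuclideanSpace ℝ ι → ℝ) :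
    MinimizesOnSupport f ∅ 0 where
  mem := by simp [coordinateSubspace_empty]
  isMinOn := by simp [coordinateSubspace_empty, isMinOn_iff]

theorem add_single_mem_coordinateSubspace [DecidableEq ι] {S : Set ι} {x : EuclideanSpace ℝ ι}
    (hx : x ∈ coordinateSubspace S) {j : ι} (hj : j ∈ S) (a : ℝ) :
    x + EuclideanSpace.single j a ∈ coordinateSubspace S := by
  intro i hi
  obtain rfl | hij := eq_or_ne i j
  · exact hj
  · exact hx i (by simpa [hij] using hi)

variable [Fintype ι]

theorem neg_hammingNorm_mul_le_inner_add {μ : ℝ} (hμ : 0 < μ) {g x y : EuclideanSpace ℝ ι}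
    (hgx : ∀ j, g j * x j = 0) {G : ℝ} (hG : ∀ j, |g j| ≤ G) :
    -(hammingNorm y.ofLp * (G ^ 2 / (2 * μ))) ≤ ⟪g, y - x⟫ + μ / 2 * ‖y - x‖ ^ 2 := by
  have hcoord : ∀ j, (if y j ≠ 0 then -(G ^ 2 / (2 * μ)) else 0) ≤
      g j * (y j - x j) + μ / 2 * (y j - x j) ^ 2 := fun j => by
    have hsq : g j ^ 2 ≤ G ^ 2 := sq_le_sq.2 ((hG j).trans (le_abs_self G))
    split_ifs with hj
    · exact (neg_le_neg (by gcongr)).trans (neg_sq_div_le_mul_add_sq hμ (g j) (y j - x j))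
    · rw [not_not.1 hj, mul_sub, hgx, mul_zero, sub_zero, zero_add]
      positivity
  calc -(hammingNorm y.ofLp * (G ^ 2 / (2 * μ)))
      = ∑ j, if y j ≠ 0 then -(G ^ 2 / (2 * μ)) else 0 := by
        rw [← Finset.sum_filter, Finset.sum_const, nsmul_eq_mul, mul_neg, hammingNorm]
    _ ≤ ∑ j, (g j * (y j - x j) + μ / 2 * (y j - x j) ^ 2) := Finset.sum_le_sum fun j _ => hcoord j
    _ = ⟪g, y - x⟫ + μ / 2 * ‖y - x‖ ^ 2 := by
        rw [Finset.sum_add_distrib, ← Finset.mul_sum, EuclideanSpace.real_norm_sq_eq,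
          PiLp.inner_apply]
        simp [mul_comm]

variable {f : EuclideanSpace ℝ ι → ℝ}

theorem inner_gradient_single [DecidableEq ι] (x : EuclideanSpace ℝ ι) (j : ι) (a : ℝ) :
    ⟪gradient f x, EuclideanSpace.single j a⟫ = a * gradient f x j := by
  rw [EuclideanSpace.inner_single_right, conj_trivial]

theorem MinimizesOnSupport.gradient_apply_eq_zero {S : Set ι} {x : EuclideanSpace ℝ ι}
    (hx : MinimizesOnSupport f S x) (hf : DifferentiableAt ℝ f x) {j : ι} (hj : j ∈ S) :
    gradient f x j = 0 := by
  classical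
  have hline := hx.isMinOn.hasLineDerivAt_eq_zero
    (hf.hasGradientAt.hasFDerivAt.hasLineDerivAt (EuclideanSpace.single j 1))
    (.of_forall fun a => by
      have hsmul : a • EuclideanSpace.single j (1 : ℝ) = EuclideanSpace.single j a := by
        ext i
        simp
      exact hsmul ▸ add_single_mem_coordinateSubspace hx.mem hj a)
  simpa only [InnerProductSpace.toDual_apply_apply, inner_gradient_single, one_mul] using hline

theorem MinimizesOnSupport.gradient_apply_mul_apply_eq_zero {S : Set ι} {x : EuclideanSpace ℝ ι}
    (hx : MinimizesOnSupport f S x) (hf : DifferentiableAt ℝ f x) (j : ι) :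
    gradient f x j * x j = 0 := by
  by_cases hj : x j = 0
  · rw [hj, mul_zero]
  · rw [hx.gradient_apply_eq_zero hf (hx.mem j hj), zero_mul]

/-- `f` is `β`-smooth along each coordinate direction, stated as a quadratic upper bound on `f`
with linear term the partial derivative. -/
def CoordinatewiseSmooth [DecidableEq ι] (f : EuclideanSpace ℝ ι → ℝ) (β : ℝ) : Prop :=
  ∀ x j a, f (x + EuclideanSpace.single j a) ≤ f x + a * gradient f x j + β / 2 * a ^ 2

theorem coordinatewiseSmooth_of_smooth [DecidableEq ι] {β : ℝ}
    (hf : ∀ x y, f y ≤ f x + ⟪gradient f x, y - x⟫ + β / 2 * ‖y - x‖ ^ 2) :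
    CoordinatewiseSmooth f β := fun x j a => by
  simpa only [add_sub_cancel_left, inner_gradient_single, PiLp.norm_single,
    Real.norm_eq_abs, sq_abs] using hf x (x + EuclideanSpace.single j a)

theorem CoordinatewiseSmooth.gradient_step_le [DecidableEq ι] {β : ℝ}
    (hf : CoordinatewiseSmooth f β) (hβ : 0 < β) (x : EuclideanSpace ℝ ι) (j : ι) :
    f (x + EuclideanSpace.single j (-(gradient f x j / β))) ≤
      f x - gradient f x j ^ 2 / (2 * β) := by
  refine (hf x j _).trans_eq ?_
  field_simp
  ring

/-- The fully corrective greedy scheme for `f`, warm-started at any minimizer over the initial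
support: `S t` is the support available to the iterate `θ t`, and `J t` the coordinate selected at
`θ t`. In the numbering where the first selection is made at time `1`, these are `I (t + 1)` and
`J (t + 1)`. -/
structure FullyCorrectiveGreedy (f : EuclideanSpace ℝ ι → ℝ) (θ : ℕ → EuclideanSpace ℝ ι)
    (S : ℕ → Set ι) (J : ℕ → ι) : Prop where
  minimizes t : MinimizesOnSupport f (S t) (θ t)
  support_succ t : S (t + 1) = insert (J t) (S t)
  abs_gradient_le t j : |gradient f (θ t) j| ≤ |gradient f (θ t) (J t)|

namespace FullyCorrectiveGreedy

variable {θ : ℕ → EuclideanSpace ℝ ι} {S : ℕ → Set ι} {J : ℕ → ι} {μ β : ℝ}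

theorem antitone (h : FullyCorrectiveGreedy f θ S J) : Antitone fun t => f (θ t) :=
  antitone_nat_of_succ_le fun t => (h.minimizes (t + 1)).isMinOn <|
    coordinateSubspace_mono (h.support_succ t ▸ Set.subset_insert _ _) (h.minimizes t).mem

theorem sub_le_hammingNorm_mul (h : FullyCorrectiveGreedy f θ S J) (hμ : 0 < μ)
    (hdiff : Differentiable ℝ f) {y : EuclideanSpace ℝ ι}
    (hstrong : ∀ x, f x + ⟪gradient f x, y - x⟫ + μ / 2 * ‖y - x‖ ^ 2 ≤ f y) (t : ℕ) :
    f (θ t) - f y ≤ hammingNorm y.ofLp * (gradient f (θ t) (J t) ^ 2 / (2 * μ)) := by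
  have hlower := neg_hammingNorm_mul_le_inner_add hμ (y := y)
    ((h.minimizes t).gradient_apply_mul_apply_eq_zero (hdiff _)) (h.abs_gradient_le t)
  rw [sq_abs] at hlower
  linarith [hstrong (θ t)]

variable [DecidableEq ι]

theorem of_start_zero {I : ℕ → Finset ι} (hθ0 : θ 0 = 0) (hI1 : I 1 = ∅)
    (hJ : ∀ t, 1 ≤ t → ∀ j, |⟪gradient f (θ (t - 1)), EuclideanSpace.single j 1⟫| ≤
      |⟪gradient f (θ (t - 1)), EuclideanSpace.single (J t) 1⟫|)
    (hI : ∀ t, 1 ≤ t → I (t + 1) = insert (J t) (I t))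
    (hmin : ∀ t, 1 ≤ t → MinimizesOnSupport f (I (t + 1)) (θ t)) :
    FullyCorrectiveGreedy f θ (fun t => I (t + 1)) (fun t => J (t + 1)) where
  minimizes
    | 0 => by simpa [hθ0, hI1] using minimizesOnSupport_empty_zero f
    | t + 1 => hmin (t + 1) t.succ_pos
  support_succ t := by rw [hI (t + 1) t.succ_pos, Finset.coe_insert]
  abs_gradient_le t j := by
    simpa only [inner_gradient_single, one_mul, Nat.add_sub_cancel] using hJ (t + 1) t.succ_pos j

theorem sq_gradient_div_le_sub (h : FullyCorrectiveGreedy f θ S J) (hβ : 0 < β)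
    (hsmooth : CoordinatewiseSmooth f β) (t : ℕ) :
    gradient f (θ t) (J t) ^ 2 / (2 * β) ≤ f (θ t) - f (θ (t + 1)) := by
  have hstep := hsmooth.gradient_step_le hβ (θ t) (J t)
  have hmem : θ t + EuclideanSpace.single (J t) (-(gradient f (θ t) (J t) / β)) ∈
      coordinateSubspace (S (t + 1)) := by
    rw [h.support_succ t]
    exact add_single_mem_coordinateSubspace
      (coordinateSubspace_mono (Set.subset_insert _ _) (h.minimizes t).mem)
      (Set.mem_insert _ _) _
  have hcorr := isMinOn_iff.1 (h.minimizes (t + 1)).isMinOn _ hmem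
  linarith

theorem sub_le_mul_decrease (h : FullyCorrectiveGreedy f θ S J) (hμ : 0 < μ) (hβ : 0 < β)
    (hdiff : Differentiable ℝ f) (hsmooth : CoordinatewiseSmooth f β) {y : EuclideanSpace ℝ ι}
    (hstrong : ∀ x, f x + ⟪gradient f x, y - x⟫ + μ / 2 * ‖y - x‖ ^ 2 ≤ f y) (t : ℕ) :
    f (θ t) - f y ≤ hammingNorm y.ofLp * (β / μ) * (f (θ t) - f (θ (t + 1))) := calc
  f (θ t) - f y ≤ hammingNorm y.ofLp * (gradient f (θ t) (J t) ^ 2 / (2 * μ)) :=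
    h.sub_le_hammingNorm_mul hμ hdiff hstrong t
  _ = hammingNorm y.ofLp * (β / μ) * (gradient f (θ t) (J t) ^ 2 / (2 * β)) := by field_simp
  _ ≤ hammingNorm y.ofLp * (β / μ) * (f (θ t) - f (θ (t + 1))) := by
    gcongr
    exact h.sq_gradient_div_le_sub hβ hsmooth t

end FullyCorrectiveGreedy

theorem fully_corrective_greedy_convergence_general [DecidableEq ι]
    {θ : ℕ → EuclideanSpace ℝ ι} {S : ℕ → Set ι} {J : ℕ → ι} {μ β ε : ℝ}
    (h : FullyCorrectiveGreedy f θ S J) (hμ : 0 < μ) (hβ : 0 < β) (hdiff : Differentiable ℝ f)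
    (hsmooth : CoordinatewiseSmooth f β) {y : EuclideanSpace ℝ ι}
    (hstrong : ∀ x, f x + ⟪gradient f x, y - x⟫ + μ / 2 * ‖y - x‖ ^ 2 ≤ f y) (hε : 0 < ε) {t : ℕ}
    (ht : hammingNorm y.ofLp * (β / μ) * Real.log ((f (θ 0) - f y) / ε) ≤ t) :
    f (θ t) - f y ≤ ε := by
  have hdecrease : ∀ s, f (θ s) - f y ≤
      hammingNorm y.ofLp * (β / μ) * ((f (θ s) - f y) - (f (θ (s + 1)) - f y)) := fun s => by
    simpa only [sub_sub_sub_cancel_right] using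
      h.sub_le_mul_decrease hμ hβ hdiff hsmooth hstrong s
  have hanti : Antitone fun s => f (θ s) - f y := fun _ _ hst => sub_le_sub_right (h.antitone hst) _
  exact le_of_le_mul_sub_succ_of_mul_log_div_le (by positivity) hanti hdecrease hε ht

end Coordinates

/-- Fully corrective greedy convergence (Theorem 2 of the paper, with the logarithmic
factor made explicit): if `R̂ : ℝ^{M₀} → ℝ` is differentiable, `μ`-strongly convex and
`β`-smooth, and the iterates `θ^{(t)}` are generated by the fully corrective greedy
scheme (select the coordinate maximizing `|⟨∇R̂(θ^{(t−1)}), e_j⟩|`, add it to the active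
set, and fully minimize `R̂` over vectors supported on the active set), then for every
`ε > 0` and `θ̄`, once `t ≥ ‖θ̄‖₀·(β/μ)·log((R̂(0) − R̂(θ̄))/ε)` one has
`R̂(θ^{(t)}) − R̂(θ̄) ≤ ε`. -/
theorem fully_corrective_greedy_convergence (M₀ : ℕ)
    (Rhat : EuclideanSpace ℝ (Fin M₀) → ℝ)
    (μ β : ℝ) (hμ : 0 < μ) (hβ : 0 < β)
    (hdiff : Differentiable ℝ Rhat)
    (hstrong : ∀ x y : EuclideanSpace ℝ (Fin M₀),
      Rhat x + ⟪gradient Rhat x, y - x⟫ + μ / 2 * ‖y - x‖ ^ 2 ≤ Rhat y)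
    (hsmooth : ∀ x y : EuclideanSpace ℝ (Fin M₀),
      Rhat y ≤ Rhat x + ⟪gradient Rhat x, y - x⟫ + β / 2 * ‖y - x‖ ^ 2)
    (θ : ℕ → EuclideanSpace ℝ (Fin M₀)) (I : ℕ → Finset (Fin M₀)) (J : ℕ → Fin M₀)
    (hθ0 : θ 0 = 0) (hI1 : I 1 = ∅)
    (hJ : ∀ t, 1 ≤ t → ∀ j : Fin M₀,
      |⟪gradient Rhat (θ (t - 1)), EuclideanSpace.single j 1⟫| ≤
        |⟪gradient Rhat (θ (t - 1)), EuclideanSpace.single (J t) 1⟫|)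
    (hI : ∀ t, 1 ≤ t → I (t + 1) = insert (J t) (I t))
    (hsupp : ∀ t, 1 ≤ t → ∀ j : Fin M₀, θ t j ≠ 0 → j ∈ I (t + 1))
    (hmin : ∀ t, 1 ≤ t → ∀ v : EuclideanSpace ℝ (Fin M₀),
      (∀ j : Fin M₀, v j ≠ 0 → j ∈ I (t + 1)) → Rhat (θ t) ≤ Rhat v)
    (ε : ℝ) (hε : 0 < ε) (θbar : EuclideanSpace ℝ (Fin M₀)) (t : ℕ)
    (ht : ((Finset.univ.filter fun j => θbar j ≠ 0).card : ℝ) * (β / μ) *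
        Real.log ((Rhat 0 - Rhat θbar) / ε) ≤ (t : ℝ)) :
    Rhat (θ t) - Rhat θbar ≤ ε :=
  fully_corrective_greedy_convergence_general
    (.of_start_zero hθ0 hI1 hJ hI fun s hs => ⟨hsupp s hs, hmin s hs⟩)
    hμ hβ hdiff (coordinatewiseSmooth_of_smooth hsmooth) (hstrong · θbar) hε (hθ0.symm ▸ ht)
end
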